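/- arXiv:2304.01270 — 4 statements merged into one kernel-verified Lean document; each statement's English description precedes it below -/
import Mathlib

section
/- Let ρ be a d×d complex density matrix and H a Hermitian d×d complex matrix. Then the infimum over unitaries U ∈ U(d) of re Tr[U ρ U† H] equals Σ_{ℓ=1}^d λ_ℓ μ_ℓ, where λ_1 ≥ … ≥ λ_d are the eigenvalues of ρ listed in decreasing order and μ_1 ≤ … ≤ μ_d are the eigenvalues of H listed in increasing order. Consequently the ergotropy satisfies ℰ(ρ;H) = re Tr[ρH] − Σ_{ℓ=1}^d λ_ℓ μ_ℓ, i.e. it equals the mean-energy gap between ρ and its passive counterpart. -/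
/-!
Diagonalise `ρ = V diag(a) V†` and `H = W diag(b) W†`. With the unitary `X = W† U V`, the energy
`re Tr[U ρ U† H]` equals `∑ i j, |X i j|² a j b i` (`energy_eq`). The matrix `(|X i j|²)` is doubly
stochastic (`normSq_mem_doublyStochastic`), hence by Birkhoff's theorem a convex combination of
permutation matrices, and on each permutation matrix the rearrangement inequality bounds the
energy below by the antitonically paired sum `∑ ℓ, lam ℓ * mu ℓ`
(`sum_mul_le_of_mem_doublyStochastic`). Equality is attained when `X` is the permutation matrix
matching the two orderings, so the sum is a minimum of the energy over the unitary group
(`isLeast_energy`); both claims follow.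
-/

open Matrix Filter Topology
open scoped ComplexOrder Kronecker

noncomputable section

/-- A density matrix: positive semidefinite with unit trace. -/
def IsDensity {n : Type*} [Fintype n] [DecidableEq n] (ρ : Matrix n n ℂ) : Prop :=
  ρ.PosSemidef ∧ ρ.trace = 1

/-- The ergotropy `ℰ(ρ;H) = ⨆_{U ∈ U(d)} (re Tr[ρH] − re Tr[U ρ U† H])`. -/
def ergo {n : Type*} [Fintype n] [DecidableEq n] (ρ H : Matrix n n ℂ) : ℝ :=
  ⨆ U : Matrix.unitaryGroup n ℂ,
    ((ρ * H).trace.re -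
      ((U : Matrix n n ℂ) * ρ * star (U : Matrix n n ℂ) * H).trace.re)

/-- `N`-fold tensor power of a `d × d` matrix:
`ρ^{⊗N} f g = ∏_{i<N} ρ (f i) (g i)`. -/
def tpow {d : ℕ} (ρ : Matrix (Fin d) (Fin d) ℂ) (N : ℕ) :
    Matrix (Fin N → Fin d) (Fin N → Fin d) ℂ :=
  Matrix.of fun f g => ∏ i, ρ (f i) (g i)

/-- Tensor product `ρ₁ ⊗ ⋯ ⊗ ρₙ` of `n` single-site matrices. -/
def prodMat {d n : ℕ} (ρs : Fin n → Matrix (Fin d) (Fin d) ℂ) :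
    Matrix (Fin n → Fin d) (Fin n → Fin d) ℂ :=
  Matrix.of fun f g => ∏ i, ρs i (f i) (g i)

/-- Noninteracting `N`-site Hamiltonian:
`h^{(N)} f g = Σ_{i<N} h (f i) (g i) · ∏_{j≠i} (if f j = g j then 1 else 0)`. -/
def hSum {d : ℕ} (h : Matrix (Fin d) (Fin d) ℂ) (N : ℕ) :
    Matrix (Fin N → Fin d) (Fin N → Fin d) ℂ :=
  Matrix.of fun f g =>
    ∑ i, h (f i) (g i) * ∏ j ∈ Finset.univ.erase i, (if f j = g j then (1:ℂ) else 0)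

/-- The ampliation `Λ ⊗ id_k` of a linear map on `d × d` matrices. -/
def Ampliation {d : ℕ} (Λ : Matrix (Fin d) (Fin d) ℂ →ₗ[ℂ] Matrix (Fin d) (Fin d) ℂ)
    (k : ℕ) (M : Matrix (Fin d × Fin k) (Fin d × Fin k) ℂ) :
    Matrix (Fin d × Fin k) (Fin d × Fin k) ℂ :=
  Matrix.of fun p q => Λ (Matrix.of fun i' j' => M (i', p.2) (j', q.2)) p.1 q.1

/-- A quantum channel: a ℂ-linear, trace-preserving, completely positive map. -/
def IsChannel {d : ℕ} (Λ : Matrix (Fin d) (Fin d) ℂ →ₗ[ℂ] Matrix (Fin d) (Fin d) ℂ) : Prop :=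
  (∀ M, (Λ M).trace = M.trace) ∧
  ∀ k : ℕ, ∀ M : Matrix (Fin d × Fin k) (Fin d × Fin k) ℂ,
    M.PosSemidef → (Ampliation Λ k M).PosSemidef

/-- Local ergotropy of an `n`-site state: the supremum is restricted to
product unitaries `U₁ ⊗ ⋯ ⊗ Uₙ`. -/
def locErgo {d n : ℕ} (σ H : Matrix (Fin n → Fin d) (Fin n → Fin d) ℂ) : ℝ :=
  ⨆ U : Fin n → Matrix.unitaryGroup (Fin d) ℂ,
    ((σ * H).trace.re -
      ((prodMat fun i => (U i : Matrix (Fin d) (Fin d) ℂ)) * σ *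
        star (prodMat fun i => (U i : Matrix (Fin d) (Fin d) ℂ)) * H).trace.re)

/-- Von Neumann entropy `S(σ) = Σ_i −λ_i log λ_i` of a Hermitian matrix. -/
def vnEntropy {n : Type*} [Fintype n] [DecidableEq n]
    {σ : Matrix n n ℂ} (hσ : σ.IsHermitian) : ℝ :=
  ∑ i, Real.negMulLog (hσ.eigenvalues i)

/-- `i`-th single-site reduced density matrix of an `n`-site state. -/
def red {d n : ℕ} (ρ : Matrix (Fin n → Fin d) (Fin n → Fin d) ℂ) (i : Fin n) :
    Matrix (Fin d) (Fin d) ℂ :=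
  Matrix.of fun a b =>
    ∑ f ∈ Finset.univ.filter (fun f : Fin n → Fin d => f i = a), ρ f (Function.update f i b)

/-- Separability: `ρ` is a convex combination of product density matrices. -/
def SepState {d n : ℕ} (ρ : Matrix (Fin n → Fin d) (Fin n → Fin d) ℂ) : Prop :=
  ∃ (m : ℕ) (p : Fin m → ℝ) (σs : Fin m → Fin n → Matrix (Fin d) (Fin d) ℂ),
    (∀ k, 0 ≤ p k) ∧ (∑ k, p k = 1) ∧ (∀ k i, IsDensity (σs k i)) ∧
    ρ = ∑ k, (p k : ℂ) • prodMat (σs k)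

/-- Total ergotropy `ℰ_tot(σ;h) = ⨆_{N≥1} ℰ(σ^{⊗N}; h^{(N)})/N`. -/
def Etot {d : ℕ} (σ h : Matrix (Fin d) (Fin d) ℂ) : ℝ :=
  ⨆ N : ℕ+, ergo (tpow σ (N:ℕ)) (hSum h (N:ℕ)) / (N:ℕ)

/-- Largest eigenvalue of a Hermitian matrix. -/
def lamMax {d : ℕ} {h : Matrix (Fin d) (Fin d) ℂ} (hh : h.IsHermitian) : ℝ :=
  ⨆ i, hh.eigenvalues i

/-- Single-shot energy-constrained maximal output ergotropy `ℰ^{(1)}(Λ;e)`. -/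
def E1 {d : ℕ} (Λ : Matrix (Fin d) (Fin d) ℂ →ₗ[ℂ] Matrix (Fin d) (Fin d) ℂ)
    (h : Matrix (Fin d) (Fin d) ℂ) (e : ℝ) : ℝ :=
  sSup {x | ∃ ρ : Matrix (Fin d) (Fin d) ℂ,
    IsDensity ρ ∧ (ρ * h).trace.re ≤ e ∧ x = ergo (Λ ρ) h}

/-- Single-shot energy-constrained maximal output total ergotropy `ℰ_tot^{(1)}(Λ;e)`. -/
def E1tot {d : ℕ} (Λ : Matrix (Fin d) (Fin d) ℂ →ₗ[ℂ] Matrix (Fin d) (Fin d) ℂ)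
    (h : Matrix (Fin d) (Fin d) ℂ) (e : ℝ) : ℝ :=
  sSup {x | ∃ ρ : Matrix (Fin d) (Fin d) ℂ,
    IsDensity ρ ∧ (ρ * h).trace.re ≤ e ∧ x = Etot (Λ ρ) h}

/-- `χ(Λ;e)`: supremum of `Σ_j p_j ℰ^{(1)}(Λ;e_j)` over finite probability vectors
`(p_j)` and energies `e_j ∈ [0, lmax]` with `Σ_j p_j e_j ≤ e`. -/
def chi {d : ℕ} (Λ : Matrix (Fin d) (Fin d) ℂ →ₗ[ℂ] Matrix (Fin d) (Fin d) ℂ)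
    (h : Matrix (Fin d) (Fin d) ℂ) (lmax e : ℝ) : ℝ :=
  sSup {x | ∃ (m : ℕ) (p ev : Fin m → ℝ),
    (∀ j, 0 ≤ p j) ∧ (∑ j, p j = 1) ∧ (∀ j, ev j ∈ Set.Icc (0:ℝ) lmax) ∧
    (∑ j, p j * ev j ≤ e) ∧ x = ∑ j, p j * E1 Λ h (ev j)}

/-- `χ_tot(Λ;e)`: as `χ` but with the total ergotropy. -/
def chiTot {d : ℕ} (Λ : Matrix (Fin d) (Fin d) ℂ →ₗ[ℂ] Matrix (Fin d) (Fin d) ℂ)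
    (h : Matrix (Fin d) (Fin d) ℂ) (lmax e : ℝ) : ℝ :=
  sSup {x | ∃ (m : ℕ) (p ev : Fin m → ℝ),
    (∀ j, 0 ≤ p j) ∧ (∑ j, p j = 1) ∧ (∀ j, ev j ∈ Set.Icc (0:ℝ) lmax) ∧
    (∑ j, p j * ev j ≤ e) ∧ x = ∑ j, p j * E1tot Λ h (ev j)}

/-- `ℰ_loc^{(n)}(Λ;E)`. -/
def ElocN {d : ℕ}
    (Λfam : ∀ n : ℕ, Matrix (Fin n → Fin d) (Fin n → Fin d) ℂ →ₗ[ℂ]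
      Matrix (Fin n → Fin d) (Fin n → Fin d) ℂ)
    (h : Matrix (Fin d) (Fin d) ℂ) (n : ℕ) (E : ℝ) : ℝ :=
  sSup {x | ∃ ρ : Matrix (Fin n → Fin d) (Fin n → Fin d) ℂ,
    IsDensity ρ ∧ (ρ * hSum h n).trace.re ≤ E ∧ x = locErgo (Λfam n ρ) (hSum h n)}

/-- `ℰ_{loc,sep}^{(n)}(Λ;E)`. -/
def ElocSepN {d : ℕ}
    (Λfam : ∀ n : ℕ, Matrix (Fin n → Fin d) (Fin n → Fin d) ℂ →ₗ[ℂ]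
      Matrix (Fin n → Fin d) (Fin n → Fin d) ℂ)
    (h : Matrix (Fin d) (Fin d) ℂ) (n : ℕ) (E : ℝ) : ℝ :=
  sSup {x | ∃ ρ : Matrix (Fin n → Fin d) (Fin n → Fin d) ℂ,
    IsDensity ρ ∧ SepState ρ ∧ (ρ * hSum h n).trace.re ≤ E ∧
    x = locErgo (Λfam n ρ) (hSum h n)}

/-- `ℰ_sep^{(n)}(Λ;E)`. -/
def EsepN {d : ℕ}
    (Λfam : ∀ n : ℕ, Matrix (Fin n → Fin d) (Fin n → Fin d) ℂ →ₗ[ℂ]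
      Matrix (Fin n → Fin d) (Fin n → Fin d) ℂ)
    (h : Matrix (Fin d) (Fin d) ℂ) (n : ℕ) (E : ℝ) : ℝ :=
  sSup {x | ∃ ρ : Matrix (Fin n → Fin d) (Fin n → Fin d) ℂ,
    IsDensity ρ ∧ SepState ρ ∧ (ρ * hSum h n).trace.re ≤ E ∧
    x = ergo (Λfam n ρ) (hSum h n)}

/-- The unitary orbit energy, in terms of the overlaps `X = W† U V` of the two eigenbases. -/
lemma energy_eq {d : ℕ} {ρ H : Matrix (Fin d) (Fin d) ℂ} (hρ : ρ.IsHermitian)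
    (hH : H.IsHermitian) (U : Matrix.unitaryGroup (Fin d) ℂ) :
    ((U : Matrix (Fin d) (Fin d) ℂ) * ρ * star (U : Matrix (Fin d) (Fin d) ℂ) * H).trace.re =
      ∑ i, ∑ j, Complex.normSq
          ((star hH.eigenvectorUnitary * U * hρ.eigenvectorUnitary :
            Matrix.unitaryGroup (Fin d) ℂ) i j) *
        (hρ.eigenvalues j * hH.eigenvalues i) := by
  set V := hρ.eigenvectorUnitary with hV
  set W := hH.eigenvectorUnitary with hW
  set X : Matrix.unitaryGroup (Fin d) ℂ := star W * U * V with hX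
  have key : ((U : Matrix (Fin d) (Fin d) ℂ) * ρ * star (U : Matrix (Fin d) (Fin d) ℂ) * H).trace =
      ((X : Matrix (Fin d) (Fin d) ℂ) * diagonal (fun i => (hρ.eigenvalues i : ℂ)) *
        star (X : Matrix (Fin d) (Fin d) ℂ) * diagonal (fun i => (hH.eigenvalues i : ℂ))).trace := by
    conv_lhs =>
      rw [hρ.spectral_theorem, hH.spectral_theorem, Unitary.conjStarAlgAut_apply,
        Unitary.conjStarAlgAut_apply, ← hV, ← hW]
    rw [← mul_assoc, Matrix.trace_mul_comm]
    simp only [hX, Submonoid.coe_mul, Unitary.coe_star, star_mul, star_star, mul_assoc]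
    rfl
  rw [key, Matrix.trace, Complex.re_sum]
  refine Finset.sum_congr rfl fun i _ => ?_
  rw [Matrix.diag_apply, Matrix.mul_diagonal, Matrix.mul_apply, Finset.sum_mul, Complex.re_sum]
  refine Finset.sum_congr rfl fun j _ => ?_
  rw [Matrix.mul_diagonal, Matrix.star_apply]
  have : X.1 i j * (hρ.eigenvalues j : ℂ) * star (X.1 i j) * (hH.eigenvalues i : ℂ) =
      ((Complex.normSq (X.1 i j) * (hρ.eigenvalues j * hH.eigenvalues i) : ℝ) : ℂ) := by
    push_cast
    rw [Complex.normSq_eq_conj_mul_self, ← starRingEnd_apply]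
    ring
  rw [this, Complex.ofReal_re]

lemma normSq_mem_doublyStochastic {d : ℕ} (X : Matrix.unitaryGroup (Fin d) ℂ) :
    (Matrix.of fun i j => Complex.normSq (X i j)) ∈ doublyStochastic ℝ (Fin d) := by
  rw [mem_doublyStochastic_iff_sum]
  refine ⟨fun i j => Complex.normSq_nonneg _, fun i => ?_, fun j => ?_⟩
  · have h := congrFun (congrFun (Matrix.mem_unitaryGroup_iff.1 X.2) i) i
    rw [Matrix.mul_apply, Matrix.one_apply_eq] at h
    apply Complex.ofReal_injective
    rw [Complex.ofReal_sum, Complex.ofReal_one, ← h]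
    refine Finset.sum_congr rfl fun j _ => ?_
    rw [Matrix.star_apply, ← starRingEnd_apply, Complex.mul_conj]
    rfl
  · have h := congrFun (congrFun (Matrix.mem_unitaryGroup_iff'.1 X.2) j) j
    rw [Matrix.mul_apply, Matrix.one_apply_eq] at h
    apply Complex.ofReal_injective
    rw [Complex.ofReal_sum, Complex.ofReal_one, ← h]
    refine Finset.sum_congr rfl fun i _ => ?_
    rw [Matrix.star_apply, ← starRingEnd_apply, ← Complex.normSq_eq_conj_mul_self]
    rfl

lemma sum_permMatrix_mul {d : ℕ} (π : Equiv.Perm (Fin d)) (a b : Fin d → ℝ) :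
    ∑ i, ∑ j, π.permMatrix ℝ i j * (a j * b i) = ∑ i, a (π i) * b i := by
  refine Finset.sum_congr rfl fun i _ => ?_
  simp [Equiv.Perm.permMatrix, PEquiv.toMatrix_apply, Equiv.toPEquiv_apply]

/-- By Birkhoff's theorem, the rearrangement inequality extends from permutations to doubly
stochastic matrices. -/
lemma sum_mul_le_of_mem_doublyStochastic {d : ℕ} {a b : Fin d → ℝ} {σ τ : Equiv.Perm (Fin d)}
    (ha : Antitone (a ∘ σ)) (hb : Monotone (b ∘ τ)) {M : Matrix (Fin d) (Fin d) ℝ}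
    (hM : M ∈ doublyStochastic ℝ (Fin d)) :
    ∑ ℓ, (a ∘ σ) ℓ * (b ∘ τ) ℓ ≤ ∑ i, ∑ j, M i j * (a j * b i) := by
  obtain ⟨w, hw, hw1, rfl⟩ := exists_eq_sum_perm_of_mem_doublyStochastic hM
  have hperm (π : Equiv.Perm (Fin d)) :
      ∑ ℓ, (a ∘ σ) ℓ * (b ∘ τ) ℓ ≤ ∑ i, a (π i) * b i := by
    rw [← Equiv.sum_comp τ (fun i => a (π i) * b i)]
    simpa using (ha.antivary hb).sum_mul_le_sum_comp_perm_mul (σ := σ⁻¹ * π * τ)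
  calc ∑ ℓ, (a ∘ σ) ℓ * (b ∘ τ) ℓ
      = ∑ π, w π * ∑ ℓ, (a ∘ σ) ℓ * (b ∘ τ) ℓ := by rw [← Finset.sum_mul, hw1, one_mul]
    _ ≤ ∑ π, w π * ∑ i, a (π i) * b i :=
        Finset.sum_le_sum fun π _ => mul_le_mul_of_nonneg_left (hperm π) (hw π)
    _ = ∑ π, ∑ i, ∑ j, w π * (π.permMatrix ℝ i j * (a j * b i)) := by
        simp only [← sum_permMatrix_mul, Finset.mul_sum]
    _ = ∑ i, ∑ j, (∑ π, w π • π.permMatrix ℝ) i j * (a j * b i) := by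
        rw [Finset.sum_comm]
        refine Finset.sum_congr rfl fun i _ => ?_
        rw [Finset.sum_comm]
        refine Finset.sum_congr rfl fun j _ => ?_
        rw [Matrix.sum_apply, Finset.sum_mul]
        refine Finset.sum_congr rfl fun π _ => ?_
        rw [Matrix.smul_apply, smul_eq_mul, mul_assoc]

lemma permMatrix_mem_unitaryGroup {d : ℕ} (π : Equiv.Perm (Fin d)) :
    π.permMatrix ℂ ∈ Matrix.unitaryGroup (Fin d) ℂ := by
  rw [Matrix.mem_unitaryGroup_iff, Matrix.star_eq_conjTranspose, Matrix.conjTranspose_permMatrix,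
    ← Matrix.permMatrix_mul]
  simp

/-- The passive energy is attained and is the minimum over the unitary orbit. -/
lemma isLeast_energy {d : ℕ} {ρ H : Matrix (Fin d) (Fin d) ℂ} (hρ : ρ.IsHermitian)
    (hH : H.IsHermitian) {σ τ : Equiv.Perm (Fin d)}
    (ha : Antitone (hρ.eigenvalues ∘ σ)) (hb : Monotone (hH.eigenvalues ∘ τ)) :
    IsLeast (Set.range fun U : Matrix.unitaryGroup (Fin d) ℂ =>
        ((U : Matrix (Fin d) (Fin d) ℂ) * ρ * star (U : Matrix (Fin d) (Fin d) ℂ) * H).trace.re)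
      (∑ ℓ, (hρ.eigenvalues ∘ σ) ℓ * (hH.eigenvalues ∘ τ) ℓ) := by
  refine ⟨?_, ?_⟩
    -- The minimiser is the `U` whose overlap matrix `W† U V` is the permutation matrix of `σ τ⁻¹`.
  · let P : Matrix.unitaryGroup (Fin d) ℂ := ⟨_, permMatrix_mem_unitaryGroup (σ * τ⁻¹)⟩
    refine ⟨hH.eigenvectorUnitary * P * star hρ.eigenvectorUnitary, ?_⟩
    have hX : star hH.eigenvectorUnitary *
        (hH.eigenvectorUnitary * P * star hρ.eigenvectorUnitary) * hρ.eigenvectorUnitary = P := by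
      simp only [mul_assoc, Unitary.star_mul_self, mul_one]
      rw [← mul_assoc, Unitary.star_mul_self, one_mul]
    have hP (i j) : Complex.normSq (P i j) = (σ * τ⁻¹).permMatrix ℝ i j := by
      change Complex.normSq ((σ * τ⁻¹).permMatrix ℂ i j) = _
      simp only [Equiv.Perm.permMatrix, PEquiv.toMatrix_apply]
      split_ifs <;> simp
    beta_reduce
    rw [energy_eq hρ hH, hX]
    simp only [hP]
    rw [sum_permMatrix_mul, ← Equiv.sum_comp τ]
    simp
  · rintro _ ⟨U, rfl⟩
    beta_reduce
    rw [energy_eq hρ hH]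
    exact sum_mul_le_of_mem_doublyStochastic ha hb (normSq_mem_doublyStochastic _)

theorem statement0 {d : ℕ} (ρ H : Matrix (Fin d) (Fin d) ℂ)
    (hρ : IsDensity ρ) (hH : H.IsHermitian) (lam mu : Fin d → ℝ)
    (hlam : ∃ σ : Equiv.Perm (Fin d), lam = hρ.1.isHermitian.eigenvalues ∘ σ)
    (hlamA : Antitone lam)
    (hmu : ∃ σ : Equiv.Perm (Fin d), mu = hH.eigenvalues ∘ σ)
    (hmuM : Monotone mu) :
    (⨅ U : Matrix.unitaryGroup (Fin d) ℂ,
        ((U : Matrix (Fin d) (Fin d) ℂ) * ρ * star (U : Matrix (Fin d) (Fin d) ℂ) * H).trace.re)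
      = ∑ ℓ, lam ℓ * mu ℓ ∧
    ergo ρ H = (ρ * H).trace.re - ∑ ℓ, lam ℓ * mu ℓ := by
  obtain ⟨σ, rfl⟩ := hlam
  obtain ⟨τ, rfl⟩ := hmu
  have h := isLeast_energy hρ.1.isHermitian hH hlamA hmuM
  refine ⟨h.csInf_eq, IsGreatest.csSup_eq ⟨?_, ?_⟩⟩
  · obtain ⟨U, hU⟩ := h.1
    exact ⟨U, congrArg (fun x => (ρ * H).trace.re - x) hU⟩
  · rintro _ ⟨U, rfl⟩
    exact sub_le_sub_left (h.2 ⟨U, rfl⟩) _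

end
end

section
/- Ergotropy is superadditive under tensor products of states with noninteracting Hamiltonians: if ρ_A is a d_A×d_A density matrix, ρ_B a d_B×d_B density matrix, h_A and h_B are Hermitian matrices of the corresponding sizes, and H_{AB} := h_A ⊗ I + I ⊗ h_B (Kronecker products, acting on matrices indexed by Fin d_A × Fin d_B), then ℰ(ρ_A ⊗ ρ_B; H_{AB}) ≥ ℰ(ρ_A; h_A) + ℰ(ρ_B; h_B). -/
/-!
If `U` and `V` are unitary on the two factors, then `U ⊗ V` is an admissible unitary for the composite
system. Since `Tr(ρA) = Tr(ρB) = 1`, the energy of a product state for the noninteracting Hamiltonian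
is the sum of the two local energies (`trace_kronecker_noninteracting`), and conjugation by `U ⊗ V`
keeps the state a product of unit-trace matrices. The work extracted by `U ⊗ V` is therefore the sum
of the works extracted by `U` and `V`, and taking suprema over `U` and `V` gives the claim. The real
supremum in `ergo` is a genuine one because unitary matrices have entries of modulus at most one
(`ergo_bddAbove`).
-/

open Matrix Filter Topology
open scoped ComplexOrder Kronecker

noncomputable section

/-- Extractable work is bounded over the unitary group, so `ergo` is an honest supremum. -/
lemma ergo_bddAbove {n : Type*} [Fintype n] [DecidableEq n] (ρ H : Matrix n n ℂ) :
    BddAbove (Set.range fun U : Matrix.unitaryGroup n ℂ =>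
      ((ρ * H).trace.re -
        ((U : Matrix n n ℂ) * ρ * star (U : Matrix n n ℂ) * H).trace.re)) := by
  refine ⟨(ρ * H).trace.re + ∑ i, ∑ l, ∑ k, ∑ j, ‖ρ j k‖ * ‖H l i‖, ?_⟩
  rintro _ ⟨U, rfl⟩
  have key : ‖((U : Matrix n n ℂ) * ρ * star (U : Matrix n n ℂ) * H).trace‖
      ≤ ∑ i, ∑ l, ∑ k, ∑ j, ‖ρ j k‖ * ‖H l i‖ := by
    simp only [Matrix.trace, Matrix.diag_apply, Matrix.mul_apply, Finset.sum_mul]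
    refine norm_sum_le_of_le _ fun i _ => norm_sum_le_of_le _ fun l _ =>
      norm_sum_le_of_le _ fun k _ => norm_sum_le_of_le _ fun j _ => ?_
    have h1 := entry_norm_bound_of_unitary U.2 i j
    have h2 := entry_norm_bound_of_unitary U.2 l k
    rw [norm_mul, norm_mul, norm_mul, Matrix.star_apply, norm_star]
    gcongr
    calc ‖(U : Matrix n n ℂ) i j‖ * ‖ρ j k‖ * ‖(U : Matrix n n ℂ) l k‖
        ≤ 1 * ‖ρ j k‖ * 1 := by gcongr
      _ = ‖ρ j k‖ := by ring
  have h := (abs_le.mp ((Complex.abs_re_le_norm _).trans key)).1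
  dsimp only
  linarith

/-- The energy of a product of unit-trace matrices is the sum of the local energies. -/
lemma trace_kronecker_noninteracting {m n : Type*} [Fintype m] [Fintype n]
    [DecidableEq m] [DecidableEq n] (σ h : Matrix m m ℂ) (τ k : Matrix n n ℂ)
    (hσ : σ.trace = 1) (hτ : τ.trace = 1) :
    ((σ ⊗ₖ τ) * (h ⊗ₖ (1 : Matrix n n ℂ) + (1 : Matrix m m ℂ) ⊗ₖ k)).trace
      = (σ * h).trace + (τ * k).trace := by
  rw [mul_add, ← mul_kronecker_mul, ← mul_kronecker_mul, trace_add, trace_kronecker,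
    trace_kronecker, mul_one, mul_one, hσ, hτ, mul_one, one_mul]

lemma trace_unitary_conj {n : Type*} [Fintype n] [DecidableEq n] (ρ : Matrix n n ℂ)
    (U : Matrix.unitaryGroup n ℂ) :
    ((U : Matrix n n ℂ) * ρ * star (U : Matrix n n ℂ)).trace = ρ.trace := by
  rw [trace_mul_comm, ← mul_assoc, Unitary.star_mul_self_of_mem U.2, one_mul]

theorem statement3 {dA dB : ℕ}
    (ρA : Matrix (Fin dA) (Fin dA) ℂ) (ρB : Matrix (Fin dB) (Fin dB) ℂ)
    (hρA : IsDensity ρA) (hρB : IsDensity ρB)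
    (hA : Matrix (Fin dA) (Fin dA) ℂ) (hB : Matrix (Fin dB) (Fin dB) ℂ)
    (hhA : hA.IsHermitian) (hhB : hB.IsHermitian) :
    ergo ρA hA + ergo ρB hB ≤
      ergo (ρA ⊗ₖ ρB)
        (hA ⊗ₖ (1 : Matrix (Fin dB) (Fin dB) ℂ) + (1 : Matrix (Fin dA) (Fin dA) ℂ) ⊗ₖ hB) := by
  unfold ergo
  refine ciSup_add_ciSup_le fun U V => ?_
  have hUV : (U : Matrix (Fin dA) (Fin dA) ℂ) ⊗ₖ (V : Matrix (Fin dB) (Fin dB) ℂ) ∈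
      Matrix.unitaryGroup (Fin dA × Fin dB) ℂ := kronecker_mem_unitary U.2 V.2
  refine le_trans (le_of_eq ?_) (le_ciSup (ergo_bddAbove (ρA ⊗ₖ ρB) _) ⟨_, hUV⟩)
  have hconj : ((U : Matrix _ _ ℂ) ⊗ₖ (V : Matrix _ _ ℂ)) * (ρA ⊗ₖ ρB) *
      star ((U : Matrix _ _ ℂ) ⊗ₖ (V : Matrix _ _ ℂ)) =
      ((U : Matrix _ _ ℂ) * ρA * star (U : Matrix _ _ ℂ)) ⊗ₖ
        ((V : Matrix _ _ ℂ) * ρB * star (V : Matrix _ _ ℂ)) := by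
    simp only [star_eq_conjTranspose, conjTranspose_kronecker, mul_kronecker_mul]
  dsimp only
  rw [hconj, trace_kronecker_noninteracting _ _ _ _ hρA.2 hρB.2,
    trace_kronecker_noninteracting _ _ _ _ ((trace_unitary_conj ρA U).trans hρA.2)
      ((trace_unitary_conj ρB V).trans hρB.2), Complex.add_re, Complex.add_re]
  ring

end
end

section
/- For every d×d density matrix ρ and Hermitian d×d matrix h, the sequence N ↦ ℰ(ρ^{⊗N}; h^{(N)})/N converges as N → ∞, and its limit equals the supremum ⨆_{N ≥ 1} ℰ(ρ^{⊗N}; h^{(N)})/N (which is finite). In particular the total ergotropy ℰ_tot(ρ;h) := ⨆_{N≥1} ℰ(ρ^{⊗N}; h^{(N)})/N satisfies ℰ_tot(ρ;h) ≥ ℰ(ρ;h). -/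
/-!
The sequence `a N = ℰ(ρ^{⊗N}; h^{(N)})` is superadditive: splitting `m + n` sites into `m` and `n`
turns `ρ^{⊗(m+n)}` into a Kronecker product and `h^{(m+n)}` into `h^{(m)} ⊗ 1 + 1 ⊗ h^{(n)}`
(`tpow_add`, `hSum_add`), so a product unitary `U ⊗ V` extracts the sum of the works extracted by
`U` and by `V` (`exists_work_kronecker`). Fekete's lemma then gives convergence of `a N / N` to its
supremum, once `a N / N` is known to be bounded.

For the bound, the entries of a positive semidefinite `σ` satisfy `|σ i j| ≤ (σ i i + σ j j) / 2`,
so for a density matrix `|Tr[σ H]|` is at most the largest absolute row sum of the Hermitian `H`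
(`abs_re_trace_mul_le`). The row sums of `h^{(N)}` are at most `N ∑ |h a b|` (`hSum_row_sum_le`).
The comparison with `ℰ(ρ;h)` is the term `N = 1`.
-/

open Matrix Filter Topology
open scoped ComplexOrder Kronecker

noncomputable section

/-! ### Boundedness -/

open scoped MatrixOrder Matrix.Norms.L2Operator in
lemma exists_eq_star_mul_self {n : Type*} [Fintype n] [DecidableEq n] {σ : Matrix n n ℂ}
    (hσ : σ.PosSemidef) : ∃ B : Matrix n n ℂ, σ = star B * B :=
  CStarAlgebra.nonneg_iff_eq_star_mul_self.mp hσ.nonneg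

/-- Entries of a positive semidefinite matrix are dominated by its diagonal. -/
lemma norm_apply_le_of_posSemidef {n : Type*} [Fintype n] [DecidableEq n] {σ : Matrix n n ℂ}
    (hσ : σ.PosSemidef) (i j : n) : ‖σ i j‖ ≤ ((σ i i).re + (σ j j).re) / 2 := by
  obtain ⟨B, rfl⟩ := exists_eq_star_mul_self hσ
  have hdiag : ∀ k, ((star B * B) k k).re = ∑ l, ‖B l k‖ ^ 2 := by
    intro k
    simp only [mul_apply, star_apply, Complex.re_sum]
    refine Finset.sum_congr rfl fun l _ => ?_
    simp [← Complex.normSq_eq_norm_sq, Complex.normSq_apply]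
  rw [hdiag, hdiag, ← Finset.sum_add_distrib, Finset.sum_div, mul_apply]
  refine (norm_sum_le _ _).trans (Finset.sum_le_sum fun l _ => ?_)
  rw [norm_mul, star_apply, norm_star]
  nlinarith [sq_nonneg (‖B l i‖ - ‖B l j‖)]

/-- The energy of a state is bounded by the largest absolute row sum of the Hamiltonian. -/
lemma abs_re_trace_mul_le {n : Type*} [Fintype n] [DecidableEq n] {σ H : Matrix n n ℂ} {C : ℝ}
    (hσ : IsDensity σ) (hH : H.IsHermitian) (hC : ∀ i, ∑ j, ‖H i j‖ ≤ C) :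
    |(σ * H).trace.re| ≤ C := by
  have hsymm : ∀ i j, ‖H j i‖ = ‖H i j‖ := fun i j => by rw [← hH.apply i j, norm_star]
  have htr : ∑ i, (σ i i).re = 1 := by
    have := congrArg Complex.re hσ.2
    simpa [trace, Complex.re_sum] using this
  have hnn : ∀ i, 0 ≤ (σ i i).re := fun i => (Complex.le_def.mp hσ.1.diag_nonneg).1
  calc |(σ * H).trace.re| ≤ ‖(σ * H).trace‖ := Complex.abs_re_le_norm _
    _ ≤ ∑ i, ∑ j, ‖σ i j‖ * ‖H j i‖ := by
        simp only [trace, diag_apply, mul_apply]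
        refine (norm_sum_le _ _).trans (Finset.sum_le_sum fun i _ => ?_)
        refine (norm_sum_le _ _).trans (Finset.sum_le_sum fun j _ => ?_)
        rw [norm_mul]
    _ ≤ ∑ i, ∑ j, (((σ i i).re * ‖H i j‖) / 2 + ((σ j j).re * ‖H j i‖) / 2) := by
        refine Finset.sum_le_sum fun i _ => Finset.sum_le_sum fun j _ => ?_
        rw [hsymm i j]
        nlinarith [norm_apply_le_of_posSemidef hσ.1 i j, norm_nonneg (H i j)]
    _ = ∑ i, (σ i i).re * ∑ j, ‖H i j‖ := by
        simp only [Finset.sum_add_distrib]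
        rw [Finset.sum_comm (f := fun i j => ((σ j j).re * ‖H j i‖) / 2)]
        simp only [← Finset.sum_add_distrib, add_halves, Finset.mul_sum]
    _ ≤ ∑ i, (σ i i).re * C :=
        Finset.sum_le_sum fun i _ => mul_le_mul_of_nonneg_left (hC i) (hnn i)
    _ = C := by rw [← Finset.sum_mul, htr, one_mul]

lemma IsDensity.unitary_conj {n : Type*} [Fintype n] [DecidableEq n] {σ : Matrix n n ℂ}
    (hσ : IsDensity σ) (U : Matrix.unitaryGroup n ℂ) :
    IsDensity ((U : Matrix n n ℂ) * σ * star (U : Matrix n n ℂ)) := by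
  refine ⟨hσ.1.mul_mul_conjTranspose_same _, ?_⟩
  rw [trace_mul_cycle, Unitary.coe_star_mul_self, one_mul, hσ.2]

/-- The work extracted from `σ` by the unitary `U`; its supremum over `U` is `ergo σ H`. -/
def work {n : Type*} [Fintype n] [DecidableEq n] (σ H : Matrix n n ℂ)
    (U : Matrix.unitaryGroup n ℂ) : ℝ :=
  (σ * H).trace.re - ((U : Matrix n n ℂ) * σ * star (U : Matrix n n ℂ) * H).trace.re

lemma work_le {n : Type*} [Fintype n] [DecidableEq n] {σ H : Matrix n n ℂ} {C : ℝ}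
    (hσ : IsDensity σ) (hH : H.IsHermitian) (hC : ∀ i, ∑ j, ‖H i j‖ ≤ C)
    (U : Matrix.unitaryGroup n ℂ) : work σ H U ≤ 2 * C := by
  have h1 := abs_le.mp (abs_re_trace_mul_le hσ hH hC)
  have h2 := abs_le.mp (abs_re_trace_mul_le (hσ.unitary_conj U) hH hC)
  unfold work
  linarith [h1.2, h2.1]

lemma bddAbove_work {n : Type*} [Fintype n] [DecidableEq n] {σ H : Matrix n n ℂ}
    (hσ : IsDensity σ) (hH : H.IsHermitian) : BddAbove (Set.range (work σ H)) := by
  refine ⟨2 * ∑ i, ∑ j, ‖H i j‖, ?_⟩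
  rintro _ ⟨U, rfl⟩
  exact work_le hσ hH (fun i => Finset.single_le_sum (f := fun i => ∑ j, ‖H i j‖)
    (fun _ _ => Finset.sum_nonneg fun _ _ => norm_nonneg _) (Finset.mem_univ i)) U

/-! ### Tensor powers and noninteracting Hamiltonians -/

lemma tpow_isDensity {d : ℕ} {ρ : Matrix (Fin d) (Fin d) ℂ} (hρ : IsDensity ρ) (N : ℕ) :
    IsDensity (tpow ρ N) := by
  constructor
  -- Writing `ρ = B† B` gives `ρ^{⊗N} = (B^{⊗N})† B^{⊗N}`.
  · obtain ⟨B, rfl⟩ := exists_eq_star_mul_self hρ.1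
    have : tpow (star B * B) N = (tpow B N)ᴴ * tpow B N := by
      ext f g
      simp only [tpow, of_apply, mul_apply, conjTranspose_apply, star_apply, star_prod,
        ← Finset.prod_mul_distrib]
      exact Fintype.prod_sum fun i j => star (B j (f i)) * B j (g i)
    rw [this]
    exact posSemidef_conjTranspose_mul_self _
  · have h := hρ.2
    simp only [trace, diag_apply] at h
    simp only [trace, diag_apply, tpow, of_apply]
    rw [← Fintype.prod_sum fun (_ : Fin N) j => ρ j j]
    simp [h]

lemma hSum_isHermitian {d : ℕ} {h : Matrix (Fin d) (Fin d) ℂ} (hh : h.IsHermitian) (N : ℕ) :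
    (hSum h N).IsHermitian := by
  ext f g
  simp only [hSum, conjTranspose_apply, of_apply, star_sum, star_mul', star_prod]
  refine Finset.sum_congr rfl fun i _ => ?_
  rw [hh.apply]
  congr 1
  refine Finset.prod_congr rfl fun j _ => ?_
  simp only [eq_comm (a := g j)]
  split_ifs <;> simp

lemma prod_erase_eq_prod_ite {ι M : Type*} [Fintype ι] [DecidableEq ι] [CommMonoid M] (i : ι)
    (F : ι → M) : ∏ j ∈ Finset.univ.erase i, F j = ∏ j, if j = i then 1 else F j := by
  rw [← Finset.mul_prod_erase Finset.univ _ (Finset.mem_univ i), if_pos rfl, one_mul]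
  exact Finset.prod_congr rfl fun j hj => (if_neg (Finset.ne_of_mem_erase hj)).symm

/-- The absolute row sums of `h^{(N)}` grow at most linearly in `N`. -/
lemma hSum_row_sum_le {d : ℕ} (h : Matrix (Fin d) (Fin d) ℂ) (N : ℕ) (f : Fin N → Fin d) :
    ∑ g, ‖hSum h N f g‖ ≤ N * ∑ a, ∑ b, ‖h a b‖ := by
  have key : ∀ i : Fin N, ∑ g : Fin N → Fin d,
      ‖h (f i) (g i) * ∏ j ∈ Finset.univ.erase i, (if f j = g j then (1:ℂ) else 0)‖
        = ∑ b, ‖h (f i) b‖ := by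
    intro i
    have : ∀ g : Fin N → Fin d,
        ‖h (f i) (g i) * ∏ j ∈ Finset.univ.erase i, (if f j = g j then (1:ℂ) else 0)‖
        = ∏ j, if j = i then ‖h (f i) (g j)‖ else if f j = g j then 1 else 0 := by
      intro g
      rw [← Finset.mul_prod_erase Finset.univ _ (Finset.mem_univ i), if_pos rfl, norm_mul,
        norm_prod]
      congr 1
      refine Finset.prod_congr rfl fun j hj => ?_
      rw [if_neg (Finset.ne_of_mem_erase hj)]
      split_ifs <;> simp
    simp only [this]
    rw [← Fintype.prod_sum fun j b =>
        if j = i then ‖h (f i) b‖ else if f j = b then (1:ℝ) else 0,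
      ← Finset.mul_prod_erase Finset.univ _ (Finset.mem_univ i), Finset.prod_eq_one]
    · simp
    · intro j hj
      simp [Finset.ne_of_mem_erase hj]
  calc ∑ g, ‖hSum h N f g‖
      ≤ ∑ g : Fin N → Fin d, ∑ i, ‖h (f i) (g i) *
          ∏ j ∈ Finset.univ.erase i, (if f j = g j then (1:ℂ) else 0)‖ :=
        Finset.sum_le_sum fun g _ => by
          rw [hSum, of_apply]
          exact norm_sum_le _ _
    _ = ∑ i, ∑ b, ‖h (f i) b‖ := by
        rw [Finset.sum_comm]
        exact Finset.sum_congr rfl fun i _ => key i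
    _ ≤ ∑ _i : Fin N, ∑ a, ∑ b, ‖h a b‖ :=
        Finset.sum_le_sum fun i _ => Finset.single_le_sum (f := fun a => ∑ b, ‖h a b‖)
          (fun _ _ => Finset.sum_nonneg fun _ _ => norm_nonneg _) (Finset.mem_univ (f i))
    _ = N * ∑ a, ∑ b, ‖h a b‖ := by simp

lemma tpow_add {d : ℕ} (ρ : Matrix (Fin d) (Fin d) ℂ) (m n : ℕ) :
    (tpow ρ (m + n)).submatrix (Fin.appendEquiv m n) (Fin.appendEquiv m n)
      = tpow ρ m ⊗ₖ tpow ρ n := by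
  ext ⟨f, f'⟩ ⟨g, g'⟩
  simp [tpow, Fin.appendEquiv, Fin.prod_univ_add]

lemma hSum_add {d : ℕ} (h : Matrix (Fin d) (Fin d) ℂ) (m n : ℕ) :
    (hSum h (m + n)).submatrix (Fin.appendEquiv m n) (Fin.appendEquiv m n)
      = hSum h m ⊗ₖ 1 + 1 ⊗ₖ hSum h n := by
  have hone : ∀ (k : ℕ) (f g : Fin k → Fin d),
      (1 : Matrix (Fin k → Fin d) (Fin k → Fin d) ℂ) f g
        = ∏ j, if f j = g j then (1:ℂ) else 0 := by
    intro k f g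
    rw [one_apply, Finset.prod_ite_zero]
    simp [funext_iff]
  ext ⟨f, f'⟩ ⟨g, g'⟩
  simp only [submatrix_apply, Matrix.add_apply, kroneckerMap_apply, hone, hSum, of_apply,
    prod_erase_eq_prod_ite, Fin.sum_univ_add, Fin.prod_univ_add, Fin.appendEquiv,
    Equiv.coe_fn_mk, Fin.append_left, Fin.append_right, Finset.sum_mul, Finset.mul_sum]
  have h1 : ∀ (i : Fin m) (j : Fin n), Fin.natAdd m j ≠ Fin.castAdd n i := by
    intro i j hij
    have := congrArg Fin.val hij
    simp at this
    omega
  simp only [Fin.castAdd_inj, Fin.natAdd_inj, h1, (h1 _ _).symm, if_false]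
  congr 1
  · exact Finset.sum_congr rfl fun i _ => by ring
  · exact Finset.sum_congr rfl fun i _ => by ring

/-! ### Superadditivity -/

lemma trace_submatrix_equiv_self {m n : Type*} [Fintype m] [Fintype n] (e : m ≃ n)
    (A : Matrix n n ℂ) : (A.submatrix e e).trace = A.trace :=
  Equiv.sum_comp e fun i => A i i

/-- Work is invariant under relabelling the basis. -/
lemma exists_work_eq_of_equiv {m n : Type*} [Fintype m] [DecidableEq m] [Fintype n]
    [DecidableEq n] (e : m ≃ n) (σ H : Matrix n n ℂ) (U : Matrix.unitaryGroup m ℂ) :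
    ∃ V : Matrix.unitaryGroup n ℂ, work σ H V = work (σ.submatrix e e) (H.submatrix e e) U := by
  let V : Matrix n n ℂ := (U : Matrix m m ℂ).submatrix e.symm e.symm
  have hV : V ∈ Matrix.unitaryGroup n ℂ := by
    rw [mem_unitaryGroup_iff, star_eq_conjTranspose, conjTranspose_submatrix,
      submatrix_mul_equiv, ← star_eq_conjTranspose, mem_unitaryGroup_iff.mp U.2,
      submatrix_one_equiv]
  have hVU : V.submatrix e e = U := by ext; simp [V]
  refine ⟨⟨V, hV⟩, ?_⟩
  unfold work
  rw [← trace_submatrix_equiv_self e (σ * H), ← trace_submatrix_equiv_self e (_ * H)]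
  simp only [star_eq_conjTranspose, ← hVU, conjTranspose_submatrix, submatrix_mul_equiv]

/-- Work is additive over independent subsystems acted on by a product unitary. -/
lemma exists_work_kronecker {m n : Type*} [Fintype m] [DecidableEq m] [Fintype n]
    [DecidableEq n] {σ : Matrix m m ℂ} {τ : Matrix n n ℂ} (H : Matrix m m ℂ) (K : Matrix n n ℂ)
    (hσ : σ.trace = 1) (hτ : τ.trace = 1)
    (U : Matrix.unitaryGroup m ℂ) (V : Matrix.unitaryGroup n ℂ) :
    ∃ W : Matrix.unitaryGroup (m × n) ℂ,
      work (σ ⊗ₖ τ) (H ⊗ₖ 1 + 1 ⊗ₖ K) W = work σ H U + work τ K V := by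
  refine ⟨⟨_, kronecker_mem_unitary U.2 V.2⟩, ?_⟩
  have hU : ((U : Matrix m m ℂ) * σ * (U : Matrix m m ℂ)ᴴ).trace = 1 := by
    rw [trace_mul_cycle, ← star_eq_conjTranspose, Unitary.coe_star_mul_self, one_mul, hσ]
  have hV : ((V : Matrix n n ℂ) * τ * (V : Matrix n n ℂ)ᴴ).trace = 1 := by
    rw [trace_mul_cycle, ← star_eq_conjTranspose, Unitary.coe_star_mul_self, one_mul, hτ]
  simp only [work, star_eq_conjTranspose, conjTranspose_kronecker, mul_add,
    ← mul_kronecker_mul, trace_add, trace_kronecker, mul_one, hσ, hτ, hU, hV, one_mul,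
    Complex.add_re]
  ring

lemma ergo_superadditive {d : ℕ} {ρ h : Matrix (Fin d) (Fin d) ℂ} (hρ : IsDensity ρ)
    (hh : h.IsHermitian) (m n : ℕ) :
    ergo (tpow ρ m) (hSum h m) + ergo (tpow ρ n) (hSum h n)
      ≤ ergo (tpow ρ (m + n)) (hSum h (m + n)) := by
  refine ciSup_add_ciSup_le fun U V => ?_
  obtain ⟨W, hW⟩ := exists_work_kronecker (hSum h m) (hSum h n)
    (tpow_isDensity hρ m).2 (tpow_isDensity hρ n).2 U V
  rw [← tpow_add, ← hSum_add] at hW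
  obtain ⟨W', hW'⟩ := exists_work_eq_of_equiv (Fin.appendEquiv m n) (tpow ρ (m + n))
    (hSum h (m + n)) W
  refine le_trans (le_of_eq ?_)
    (le_ciSup (bddAbove_work (tpow_isDensity hρ (m + n)) (hSum_isHermitian hh (m + n))) W')
  rw [hW', hW]
  rfl

lemma ergo_le_ergo_one {d : ℕ} {ρ h : Matrix (Fin d) (Fin d) ℂ} (hρ : IsDensity ρ)
    (hh : h.IsHermitian) : ergo ρ h ≤ ergo (tpow ρ 1) (hSum h 1) := by
  refine ciSup_le fun U => ?_
  have h1 : (tpow ρ 1).submatrix (Equiv.funUnique (Fin 1) (Fin d)).symm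
      (Equiv.funUnique (Fin 1) (Fin d)).symm = ρ := by
    ext; simp [tpow]
  have h2 : (hSum h 1).submatrix (Equiv.funUnique (Fin 1) (Fin d)).symm
      (Equiv.funUnique (Fin 1) (Fin d)).symm = h := by
    ext; simp [hSum]
  obtain ⟨V, hV⟩ := exists_work_eq_of_equiv (Equiv.funUnique (Fin 1) (Fin d)).symm
    (tpow ρ 1) (hSum h 1) U
  rw [h1, h2] at hV
  exact hV.symm.le.trans
    (le_ciSup (bddAbove_work (tpow_isDensity hρ 1) (hSum_isHermitian hh 1)) V)

lemma ergo_div_le {d : ℕ} {ρ h : Matrix (Fin d) (Fin d) ℂ} (hρ : IsDensity ρ)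
    (hh : h.IsHermitian) (N : ℕ) :
    ergo (tpow ρ N) (hSum h N) / N ≤ 2 * ∑ a, ∑ b, ‖h a b‖ := by
  have hnn : 0 ≤ 2 * ∑ a, ∑ b, ‖h a b‖ := by positivity
  refine div_le_of_le_mul₀ (Nat.cast_nonneg N) hnn (ciSup_le fun U => ?_)
  have := work_le (tpow_isDensity hρ N) (hSum_isHermitian hh N) (hSum_row_sum_le h N) U
  unfold work at this
  linarith

theorem statement4 {d : ℕ} (ρ h : Matrix (Fin d) (Fin d) ℂ)
    (hρ : IsDensity ρ) (hh : h.IsHermitian) :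
    BddAbove (Set.range fun N : ℕ+ => ergo (tpow ρ (N:ℕ)) (hSum h (N:ℕ)) / (N:ℕ)) ∧
    Tendsto (fun N : ℕ => ergo (tpow ρ N) (hSum h N) / N) atTop
      (𝓝 (⨆ N : ℕ+, ergo (tpow ρ (N:ℕ)) (hSum h (N:ℕ)) / (N:ℕ))) ∧
    ergo ρ h ≤ ⨆ N : ℕ+, ergo (tpow ρ (N:ℕ)) (hSum h (N:ℕ)) / (N:ℕ) := by
  have hle := ergo_div_le hρ hh
  have hbdd : BddAbove (Set.range fun N : ℕ+ =>
      ergo (tpow ρ (N:ℕ)) (hSum h (N:ℕ)) / (N:ℕ)) := by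
    refine ⟨2 * ∑ a, ∑ b, ‖h a b‖, ?_⟩
    rintro _ ⟨N, rfl⟩
    exact hle N
  refine ⟨hbdd, ?_, ?_⟩
  · have hsub : Subadditive fun N => -ergo (tpow ρ N) (hSum h N) := fun m n => by
      linarith [ergo_superadditive hρ hh m n]
    have hlim := hsub.tendsto_lim (by
      refine ⟨-(2 * ∑ a, ∑ b, ‖h a b‖), ?_⟩
      rintro _ ⟨N, rfl⟩
      simp only [neg_div]
      exact neg_le_neg (hle N))
    have heq : hsub.lim = -⨆ N : ℕ+, ergo (tpow ρ (N:ℕ)) (hSum h (N:ℕ)) / (N:ℕ) := by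
      rw [Subadditive.lim, iSup, ← Real.sInf_neg]
      congr 1
      ext x
      simp only [Set.mem_image, Set.mem_Ici, Set.mem_neg, Set.mem_range, neg_div]
      constructor
      · rintro ⟨N, hN, rfl⟩
        exact ⟨⟨N, hN⟩, (neg_neg _).symm⟩
      · rintro ⟨N, hN⟩
        exact ⟨N, N.2, by rw [PNat.val] at *; linarith⟩
    rw [heq] at hlim
    simpa [neg_div] using hlim.neg
  · refine (ergo_le_ergo_one hρ hh).trans ?_
    have h1 : ergo (tpow ρ 1) (hSum h 1) / ((1 : ℕ) : ℝ) ≤ _ := le_ciSup hbdd 1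
    rwa [Nat.cast_one, div_one] at h1

end
end

section
/- For qubits, ergotropy is additive on tensor powers: if ρ is a 2×2 density matrix and h a Hermitian 2×2 matrix, then for every N ≥ 1, ℰ(ρ^{⊗N}; h^{(N)}) = N · ℰ(ρ; h). In particular the total ergotropy of a qubit state equals its ergotropy. -/
/-!
Write `ρ = V diag(p) V†` and `h = W diag(E) W†` with the populations `p` decreasing and the
energies `E` increasing. In any dimension, for two spectra ordered oppositely (`Antivary p E`), the
lowest energy reachable by a unitary is `∑ p E` (`ergo_eq_of_antivary`): the energy of
`U diag(p) U†` is a linear function of the doubly stochastic matrix `|U f g|²`, so by Birkhoff's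
theorem it is bounded below by its values at permutations, and the rearrangement inequality
handles those.

On `N` qubits, `V^{⊗N}` and `W^{⊗N}` diagonalize `ρ^{⊗N}` and `h^{(N)}`, with spectra
`∏ i, p (f i)` and `∑ i, E (f i)`. For qubits both depend only on the number `k` of ones in `f`,
the first decreasing and the second increasing in `k`, so they are again ordered oppositely
(`antivary_prod_sum`). This is where `d = 2` is essential. Finally, both terms of the resulting
formula are traces of the form `Tr[σ^{⊗N} g^{(N)}] = N Tr[σ g]` with `Tr σ = 1`
(`trace_tpow_mul_hSum`), which gives additivity.
-/

open Matrix Filter Topology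
open scoped ComplexOrder Kronecker

noncomputable section

/-! ### Minimal energy for oppositely ordered spectra -/

lemma normSq_mem_doublyStochastic_s5 {n : Type*} [Fintype n] [DecidableEq n]
    (U : Matrix.unitaryGroup n ℂ) :
    (Matrix.of fun f g => Complex.normSq ((U : Matrix n n ℂ) f g)) ∈ doublyStochastic ℝ n := by
  rw [mem_doublyStochastic_iff_sum]
  refine ⟨fun i j => Complex.normSq_nonneg _, fun i => ?_, fun j => ?_⟩
  · have h := congrFun (congrFun (Matrix.mem_unitaryGroup_iff.1 U.2) i) i
    rw [Matrix.mul_apply, Matrix.one_apply_eq] at h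
    apply Complex.ofReal_injective
    rw [Complex.ofReal_one, ← h, Complex.ofReal_sum]
    refine Finset.sum_congr rfl fun j _ => ?_
    rw [Matrix.star_apply, Matrix.of_apply, Complex.star_def, Complex.mul_conj]
  · have h := congrFun (congrFun (Matrix.mem_unitaryGroup_iff'.1 U.2) j) j
    rw [Matrix.mul_apply, Matrix.one_apply_eq] at h
    apply Complex.ofReal_injective
    rw [Complex.ofReal_one, ← h, Complex.ofReal_sum]
    refine Finset.sum_congr rfl fun i _ => ?_
    rw [Matrix.star_apply, Matrix.of_apply, Complex.star_def, mul_comm, Complex.mul_conj]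

/-- Birkhoff's theorem combined with the rearrangement inequality. -/
lemma sum_mul_le_of_mem_doublyStochastic_s5 {n : Type*} [Fintype n] [DecidableEq n]
    {p E : n → ℝ} (hpE : Antivary p E) {M : Matrix n n ℝ} (hM : M ∈ doublyStochastic ℝ n) :
    ∑ f, p f * E f ≤ ∑ f, ∑ g, M f g * (p g * E f) := by
  obtain ⟨w, hw0, hw1, rfl⟩ := exists_eq_sum_perm_of_mem_doublyStochastic hM
  have key : ∑ f, ∑ g, (∑ σ : Equiv.Perm n, w σ • σ.permMatrix ℝ) f g * (p g * E f)
      = ∑ σ : Equiv.Perm n, w σ * ∑ f, p (σ f) * E f := by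
    simp only [Matrix.sum_apply, Matrix.smul_apply, PEquiv.toMatrix_apply, Equiv.toPEquiv_apply,
      Finset.sum_mul, Finset.mul_sum, smul_eq_mul, Option.mem_some_iff]
    rw [Finset.sum_congr rfl fun f _ => Finset.sum_comm, Finset.sum_comm]
    refine Finset.sum_congr rfl fun σ _ => Finset.sum_congr rfl fun f _ => ?_
    simp
  rw [key]
  calc ∑ f, p f * E f = ∑ σ : Equiv.Perm n, w σ * ∑ f, p f * E f := by
        rw [← Finset.sum_mul, hw1, one_mul]
    _ ≤ _ := Finset.sum_le_sum fun σ _ =>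
        mul_le_mul_of_nonneg_left hpE.sum_mul_le_sum_comp_perm_mul (hw0 σ)

/-- The diagonal matrix with real entries `p`. -/
def rdiag {n : Type*} [DecidableEq n] (p : n → ℝ) : Matrix n n ℂ :=
  Matrix.diagonal fun i => (p i : ℂ)

lemma trace_rdiag_mul_rdiag {n : Type*} [Fintype n] [DecidableEq n] (p E : n → ℝ) :
    (rdiag p * rdiag E).trace.re = ∑ f, p f * E f := by
  rw [rdiag, rdiag, Matrix.diagonal_mul_diagonal, Matrix.trace_diagonal]
  simp

lemma trace_conj_rdiag_mul_rdiag {n : Type*} [Fintype n] [DecidableEq n] (U : Matrix n n ℂ)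
    (p E : n → ℝ) :
    (U * rdiag p * star U * rdiag E).trace.re
      = ∑ f, ∑ g, Complex.normSq (U f g) * (p g * E f) := by
  simp only [Matrix.trace, Matrix.diag_apply, rdiag, Matrix.mul_diagonal, Complex.re_sum]
  refine Finset.sum_congr rfl fun f _ => ?_
  rw [Matrix.mul_apply, Finset.sum_mul, Complex.re_sum]
  refine Finset.sum_congr rfl fun g _ => ?_
  rw [Matrix.mul_diagonal, Matrix.star_apply, Complex.star_def]
  have : U f g * (p g : ℂ) * (starRingEnd ℂ) (U f g) * (E f : ℂ)
      = ((Complex.normSq (U f g) * (p g * E f) : ℝ) : ℂ) := by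
    push_cast
    rw [← Complex.mul_conj]
    ring
  rw [this, Complex.ofReal_re]

/-- If the spectra of `σ` and `H` can be listed in opposite orders, the optimal unitary `W V†`
takes `σ` to the passive state `W diag(p) W†`. -/
lemma ergo_eq_of_antivary {n : Type*} [Fintype n] [DecidableEq n] {σ H : Matrix n n ℂ}
    {p E : n → ℝ} (hpE : Antivary p E) (V W : Matrix.unitaryGroup n ℂ)
    (hσ : σ = (V : Matrix n n ℂ) * rdiag p * star (V : Matrix n n ℂ))
    (hH : H = (W : Matrix n n ℂ) * rdiag E * star (W : Matrix n n ℂ)) :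
    ergo σ H = (σ * H).trace.re - (rdiag p * rdiag E).trace.re := by
  have hrot : ∀ U : Matrix.unitaryGroup n ℂ,
      ((U : Matrix n n ℂ) * σ * star (U : Matrix n n ℂ) * H).trace.re
        = (((W⁻¹ * U * V : Matrix.unitaryGroup n ℂ) : Matrix n n ℂ) * rdiag p *
            star ((W⁻¹ * U * V : Matrix.unitaryGroup n ℂ) : Matrix n n ℂ) * rdiag E).trace.re := by
    intro U
    subst hσ hH
    have : (U : Matrix n n ℂ) * ((V : Matrix n n ℂ) * rdiag p * star (V : Matrix n n ℂ)) *
        star (U : Matrix n n ℂ) * ((W : Matrix n n ℂ) * rdiag E * star (W : Matrix n n ℂ))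
        = ((U : Matrix n n ℂ) * (V : Matrix n n ℂ) * rdiag p * star (V : Matrix n n ℂ) *
        star (U : Matrix n n ℂ) * (W : Matrix n n ℂ) * rdiag E) * star (W : Matrix n n ℂ) := by
      simp only [Matrix.mul_assoc]
    rw [this, Matrix.trace_mul_comm]
    simp only [Matrix.UnitaryGroup.mul_val, Matrix.UnitaryGroup.inv_val, star_mul, star_star,
      Matrix.mul_assoc]
  have hle : ∀ U : Matrix.unitaryGroup n ℂ,
      (σ * H).trace.re - ((U : Matrix n n ℂ) * σ * star (U : Matrix n n ℂ) * H).trace.re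
        ≤ (σ * H).trace.re - (rdiag p * rdiag E).trace.re := by
    intro U
    rw [hrot, trace_conj_rdiag_mul_rdiag, trace_rdiag_mul_rdiag]
    exact sub_le_sub_left
      (sum_mul_le_of_mem_doublyStochastic_s5 hpE (normSq_mem_doublyStochastic_s5 (W⁻¹ * U * V))) _
  refine le_antisymm (ciSup_le hle) ?_
  refine le_ciSup_of_le ⟨_, Set.forall_mem_range.2 hle⟩ (W * V⁻¹) ?_
  rw [hrot]
  simp

/-! ### Tensor products of matrices -/

lemma prodMat_mul {d n : ℕ} (A B : Fin n → Matrix (Fin d) (Fin d) ℂ) :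
    prodMat A * prodMat B = prodMat fun i => A i * B i := by
  ext f g
  simp only [prodMat, Matrix.mul_apply, Matrix.of_apply, ← Finset.prod_mul_distrib]
  rw [Fintype.prod_sum]

lemma trace_prodMat {d n : ℕ} (A : Fin n → Matrix (Fin d) (Fin d) ℂ) :
    (prodMat A).trace = ∏ i, (A i).trace := by
  simp only [prodMat, Matrix.trace, Matrix.diag_apply, Matrix.of_apply]
  rw [Fintype.prod_sum]

lemma star_tpow {d : ℕ} (A : Matrix (Fin d) (Fin d) ℂ) (N : ℕ) :
    star (tpow A N) = tpow (star A) N := by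
  ext f g
  simp [tpow, Matrix.star_apply]

lemma tpow_eq_prodMat {d : ℕ} (A : Matrix (Fin d) (Fin d) ℂ) (N : ℕ) :
    tpow A N = prodMat fun _ => A := rfl

lemma tpow_mul {d : ℕ} (A B : Matrix (Fin d) (Fin d) ℂ) (N : ℕ) :
    tpow (A * B) N = tpow A N * tpow B N := by
  simp only [tpow_eq_prodMat, prodMat_mul]

lemma tpow_rdiag {d : ℕ} (p : Fin d → ℝ) (N : ℕ) :
    tpow (rdiag p) N = rdiag fun f : Fin N → Fin d => ∏ i, p (f i) := by
  ext f g
  by_cases hfg : f = g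
  · subst hfg
    simp [tpow, rdiag]
  · obtain ⟨i, hi⟩ := Function.ne_iff.1 hfg
    simp only [tpow, rdiag, Matrix.of_apply, Matrix.diagonal_apply_ne _ hfg]
    exact Finset.prod_eq_zero (Finset.mem_univ i) (Matrix.diagonal_apply_ne _ hi)

lemma tpow_one {d : ℕ} (N : ℕ) : tpow (1 : Matrix (Fin d) (Fin d) ℂ) N = 1 := by
  have h1 : ∀ {n : Type} [DecidableEq n], (1 : Matrix n n ℂ) = rdiag fun _ => 1 := by
    intro n _
    simp [rdiag]
  rw [h1, h1, tpow_rdiag]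
  simp

lemma tpow_mem_unitaryGroup {d : ℕ} (V : Matrix.unitaryGroup (Fin d) ℂ) (N : ℕ) :
    tpow (V : Matrix (Fin d) (Fin d) ℂ) N ∈ Matrix.unitaryGroup (Fin N → Fin d) ℂ := by
  rw [Matrix.mem_unitaryGroup_iff, star_tpow, ← tpow_mul, Matrix.mem_unitaryGroup_iff.1 V.2,
    tpow_one]

lemma hSum_eq_sum_prodMat {d : ℕ} (h : Matrix (Fin d) (Fin d) ℂ) (N : ℕ) :
    hSum h N = ∑ i, prodMat (Function.update (fun _ => 1) i h) := by
  ext f g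
  simp only [hSum, Matrix.of_apply, Matrix.sum_apply, prodMat]
  refine Finset.sum_congr rfl fun i _ => ?_
  rw [← Finset.mul_prod_erase _ _ (Finset.mem_univ i), Function.update_self]
  congr 1
  refine Finset.prod_congr rfl fun j hj => ?_
  rw [Function.update_of_ne (Finset.ne_of_mem_erase hj), Matrix.one_apply]

lemma hSum_conj {d : ℕ} (W : Matrix.unitaryGroup (Fin d) ℂ) (h : Matrix (Fin d) (Fin d) ℂ)
    (N : ℕ) :
    hSum ((W : Matrix (Fin d) (Fin d) ℂ) * h * star (W : Matrix (Fin d) (Fin d) ℂ)) N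
      = tpow (W : Matrix (Fin d) (Fin d) ℂ) N * hSum h N *
        star (tpow (W : Matrix (Fin d) (Fin d) ℂ) N) := by
  rw [star_tpow]
  simp only [hSum_eq_sum_prodMat, tpow_eq_prodMat, Finset.mul_sum, Finset.sum_mul, prodMat_mul]
  refine Finset.sum_congr rfl fun i _ => congrArg prodMat (funext fun j => ?_)
  by_cases hj : j = i
  · subst hj
    simp
  · simp only [Function.update_of_ne hj, mul_one]
    exact (Matrix.mem_unitaryGroup_iff.1 W.2).symm

lemma hSum_rdiag {d : ℕ} (E : Fin d → ℝ) (N : ℕ) :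
    hSum (rdiag E) N = rdiag fun f : Fin N → Fin d => ∑ i, E (f i) := by
  ext f g
  by_cases hfg : f = g
  · subst hfg
    simp [hSum, rdiag]
  · simp only [hSum, rdiag, Matrix.of_apply, Matrix.diagonal_apply_ne _ hfg]
    refine Finset.sum_eq_zero fun i _ => ?_
    by_cases hi : f i = g i
    · obtain ⟨j, hj⟩ := Function.ne_iff.1 hfg
      have hji : j ≠ i := by
        rintro rfl
        exact hj hi
      rw [Finset.prod_eq_zero (Finset.mem_erase.2 ⟨hji, Finset.mem_univ j⟩) (if_neg hj), mul_zero]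
    · rw [Matrix.diagonal_apply_ne _ hi, zero_mul]

lemma trace_tpow_mul_hSum {d : ℕ} {A : Matrix (Fin d) (Fin d) ℂ} (hA : A.trace = 1)
    (h : Matrix (Fin d) (Fin d) ℂ) (N : ℕ) :
    (tpow A N * hSum h N).trace.re = N * (A * h).trace.re := by
  have : (tpow A N * hSum h N).trace = N * (A * h).trace := by
    simp only [hSum_eq_sum_prodMat, tpow_eq_prodMat, Finset.mul_sum, prodMat_mul,
      Matrix.trace_sum, trace_prodMat]
    rw [Finset.sum_congr rfl (g := fun _ => (A * h).trace) fun i _ => ?_]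
    · simp
    rw [Finset.prod_eq_single i ?_ (by simp), Function.update_self]
    intro j _ hj
    rw [Function.update_of_ne hj, mul_one, hA]
  rw [this, ← Complex.ofReal_natCast, Complex.re_ofReal_mul]

/-! ### The qubit case -/

/-- A qubit observable is unitarily diagonalizable with its eigenvalues in decreasing order. -/
lemma exists_ordered_diagonalization {A : Matrix (Fin 2) (Fin 2) ℂ} (hA : A.IsHermitian) :
    ∃ (V : Matrix.unitaryGroup (Fin 2) ℂ) (p : Fin 2 → ℝ), p 1 ≤ p 0 ∧
      (∀ i, ∃ j, p i = hA.eigenvalues j) ∧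
      A = (V : Matrix (Fin 2) (Fin 2) ℂ) * rdiag p * star (V : Matrix (Fin 2) (Fin 2) ℂ) := by
  have hspec : A = (hA.eigenvectorUnitary : Matrix (Fin 2) (Fin 2) ℂ) * rdiag hA.eigenvalues *
      star (hA.eigenvectorUnitary : Matrix (Fin 2) (Fin 2) ℂ) := by
    conv_lhs => rw [hA.spectral_theorem]
    rfl
  rcases le_total (hA.eigenvalues 1) (hA.eigenvalues 0) with hle | hle
  · exact ⟨hA.eigenvectorUnitary, hA.eigenvalues, hle, fun i => ⟨i, rfl⟩, hspec⟩
  · have hX : (!![0, 1; 1, 0] : Matrix (Fin 2) (Fin 2) ℂ) ∈ Matrix.unitaryGroup (Fin 2) ℂ := by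
      rw [Matrix.mem_unitaryGroup_iff]
      ext i j
      fin_cases i <;> fin_cases j <;> simp [Matrix.mul_apply, Matrix.star_apply]
    refine ⟨hA.eigenvectorUnitary * ⟨_, hX⟩, ![hA.eigenvalues 1, hA.eigenvalues 0], by simpa,
      fun i => by fin_cases i <;> simp, ?_⟩
    have hswap : (!![0, 1; 1, 0] : Matrix (Fin 2) (Fin 2) ℂ) *
        rdiag ![hA.eigenvalues 1, hA.eigenvalues 0] *
        star (!![0, 1; 1, 0] : Matrix (Fin 2) (Fin 2) ℂ) = rdiag hA.eigenvalues := by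
      ext i j
      fin_cases i <;> fin_cases j <;>
        simp [Matrix.mul_apply, Matrix.star_apply, rdiag, Matrix.vecMul_diagonal]
    conv_lhs => rw [hspec, ← hswap]
    simp only [Matrix.UnitaryGroup.mul_val, star_mul, Matrix.mul_assoc]

/-- With `k` the number of ones in `f`, the population of `f` is `p₀^(N-k) p₁^k` and its energy is
`N E₀ + k (E₁ - E₀)`; these vary oppositely in `k`. -/
lemma antivary_prod_sum {p E : Fin 2 → ℝ} (hp0 : ∀ i, 0 ≤ p i) (hp : p 1 ≤ p 0)
    (hE : E 0 ≤ E 1) (N : ℕ) :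
    Antivary (fun f : Fin N → Fin 2 => ∏ i, p (f i)) (fun f => ∑ i, E (f i)) := by
  have hsum : ∀ f : Fin N → Fin 2,
      ∑ i, E (f i) = N * E 0 + ((∑ i, (f i : ℕ) : ℕ) : ℝ) * (E 1 - E 0) := by
    intro f
    have : ∀ a : Fin 2, E a = E 0 + ((a : ℕ) : ℝ) * (E 1 - E 0) := by
      intro a
      fin_cases a <;> simp
    rw [Finset.sum_congr rfl fun i _ => this (f i), Finset.sum_add_distrib, ← Finset.sum_mul]
    simp
  have hcard : ∀ f : Fin N → Fin 2, ∑ i, (1 - (f i : ℕ)) + ∑ i, (f i : ℕ) = N := by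
    intro f
    rw [← Finset.sum_add_distrib, Finset.sum_congr rfl (g := fun _ => 1) fun i _ => by omega]
    simp
  have hprod : ∀ f : Fin N → Fin 2,
      ∏ i, p (f i) = p 0 ^ (∑ i, (1 - (f i : ℕ))) * p 1 ^ (∑ i, (f i : ℕ)) := by
    intro f
    have : ∀ a : Fin 2, p a = p 0 ^ (1 - (a : ℕ)) * p 1 ^ (a : ℕ) := by
      intro a
      fin_cases a <;> simp
    rw [Finset.prod_congr rfl fun i _ => this (f i), Finset.prod_mul_distrib,
      Finset.prod_pow_eq_pow_sum, Finset.prod_pow_eq_pow_sum]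
  intro f g hfg
  simp only [hsum] at hfg
  simp only [hprod]
  have hf := hcard f
  have hg := hcard g
  generalize ∑ i, (f i : ℕ) = k at *
  generalize ∑ i, (g i : ℕ) = l at *
  generalize ∑ i, (1 - (f i : ℕ)) = kz at *
  generalize ∑ i, (1 - (g i : ℕ)) = lz at *
  have hkl : k ≤ l := by
    by_contra! hlt
    have : (l : ℝ) ≤ k := by exact_mod_cast hlt.le
    nlinarith
  obtain ⟨m, rfl⟩ := Nat.exists_eq_add_of_le hkl
  obtain rfl : kz = lz + m := by omega
  calc p 0 ^ lz * p 1 ^ (k + m) = p 0 ^ lz * p 1 ^ k * p 1 ^ m := by ring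
    _ ≤ p 0 ^ lz * p 1 ^ k * p 0 ^ m :=
        mul_le_mul_of_nonneg_left (pow_le_pow_left₀ (hp0 1) hp m)
          (mul_nonneg (pow_nonneg (hp0 0) _) (pow_nonneg (hp0 1) _))
    _ = p 0 ^ (lz + m) * p 1 ^ k := by ring

lemma ergo_tpow_qubit (ρ h : Matrix (Fin 2) (Fin 2) ℂ) (hρ : IsDensity ρ) (hh : h.IsHermitian)
    (N : ℕ) : ergo (tpow ρ N) (hSum h N) = N * ergo ρ h := by
  obtain ⟨V, p, hp, hpe, hV⟩ := exists_ordered_diagonalization hρ.1.isHermitian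
  -- Diagonalizing `-h` in decreasing order gives the energies of `h` in increasing order.
  obtain ⟨W, q, hq, -, hW⟩ := exists_ordered_diagonalization hh.neg
  have hp0 : ∀ i, 0 ≤ p i := by
    intro i
    obtain ⟨j, hj⟩ := hpe i
    rw [hj]
    exact hρ.1.eigenvalues_nonneg j
  obtain ⟨E, hE, hWE⟩ : ∃ E : Fin 2 → ℝ, E 0 ≤ E 1 ∧
      h = (W : Matrix (Fin 2) (Fin 2) ℂ) * rdiag E * star (W : Matrix (Fin 2) (Fin 2) ℂ) := by
    refine ⟨-q, neg_le_neg hq, ?_⟩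
    have hneg : rdiag (-q) = -rdiag q := by
      ext i j
      by_cases hij : i = j <;> simp [rdiag, hij]
    rw [hneg, Matrix.mul_neg, Matrix.neg_mul, ← hW, neg_neg]
  have hone : Antivary p E := by
    intro i j hij
    fin_cases i <;> fin_cases j <;> simp at hij ⊢
    · exact hp
    · linarith
  have hD : (rdiag p).trace = 1 := by
    rw [← hρ.2, hV, Matrix.trace_mul_comm, ← Matrix.mul_assoc,
      Matrix.mem_unitaryGroup_iff'.1 V.2, Matrix.one_mul]
  have hN := ergo_eq_of_antivary (σ := tpow ρ N) (H := hSum h N) (antivary_prod_sum hp0 hp hE N)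
    ⟨_, tpow_mem_unitaryGroup V N⟩ ⟨_, tpow_mem_unitaryGroup W N⟩
    (by rw [← tpow_rdiag, star_tpow, ← tpow_mul, ← tpow_mul, ← hV])
    (by rw [← hSum_rdiag, ← hSum_conj, ← hWE])
  rw [hN, ergo_eq_of_antivary hone V W hV hWE, ← tpow_rdiag, ← hSum_rdiag,
    trace_tpow_mul_hSum hρ.2, trace_tpow_mul_hSum hD]
  ring

theorem statement5 (ρ h : Matrix (Fin 2) (Fin 2) ℂ)
    (hρ : IsDensity ρ) (hh : h.IsHermitian) :
    (∀ N : ℕ, 1 ≤ N → ergo (tpow ρ N) (hSum h N) = N * ergo ρ h) ∧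
    Etot ρ h = ergo ρ h := by
  refine ⟨fun N _ => ergo_tpow_qubit ρ h hρ hh N, ?_⟩
  have : ∀ N : ℕ+, ergo (tpow ρ (N : ℕ)) (hSum h (N : ℕ)) / (N : ℕ) = ergo ρ h := by
    intro N
    rw [ergo_tpow_qubit ρ h hρ hh, mul_div_cancel_left₀]
    exact_mod_cast N.ne_zero
  rw [Etot, iSup_congr this, ciSup_const]

end
end
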